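/- (Soundness of the priority-composition axiom C3, semantically) Let p, q ∈ ℙ. The open parity game with one entry position 1, one exit position 1, two internal Player-1 positions u and v with priorities p and q respectively, and edges entry 1 → u, u → v, v → exit 1, is equivalent to the open parity game with one entry position 1, one exit position 1, a single internal Player-1 position of priority max(p,q) with edges entry 1 → it → exit 1; both have semantics {(T,1) : T ⊆ {1}×ℙ and (1, max(p,q)) ∈ T}. -/

import Mathlib

set_option linter.unusedVariables false

namespace PaperPG

/-! ## Open parity games and their semantics -/

/-- An open parity game of type `m → n`, where `m = (m⁺, m⁻)` and `n = (n⁺, n⁻)`: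
entry positions are `Fin (m.1 + n.2)`, exit positions are `Fin (m.2 + n.1)`,
`V` internal positions with owners, a priority labelling bounded by `M`,
an edge relation with a unique edge out of each entry position and a unique
edge into each exit position. -/
structure OPG (M : ℕ) (m n : ℕ × ℕ) where
  V : ℕ
  owner0 : Fin V → Bool
  E : (Fin (m.1 + n.2) ⊕ Fin V) → (Fin V ⊕ Fin (m.2 + n.1)) → Prop
  prio : Fin V → ℕ
  prio_le : ∀ v, prio v ≤ M
  entry_unique : ∀ i, ∃! t, E (Sum.inl i) t
  exit_unique : ∀ o, ∃! s, E s (Sum.inr o)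

namespace OPG

variable {M : ℕ} {m n : ℕ × ℕ}

/-- Entry positions together with internal positions: the possible sources of edges. -/
abbrev EntryV (A : OPG M m n) := Fin (m.1 + n.2) ⊕ Fin A.V

/-- All positions of an open parity game: entries + internal positions + exits. -/
abbrev Node (A : OPG M m n) := (Fin (m.1 + n.2) ⊕ Fin A.V) ⊕ Fin (m.2 + n.1)

def embed (A : OPG M m n) : (Fin A.V ⊕ Fin (m.2 + n.1)) → A.Node :=
  Sum.map Sum.inr id

/-- A strategy for Player 0 (`pl = true`) or Player 1 (`pl = false`): for every
finite history ending at a position owned by that player it chooses a successor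
along an edge (and it must choose one whenever an outgoing edge exists). -/
def Strat (A : OPG M m n) (pl : Bool) :=
  { σ : List A.EntryV → Option (Fin A.V ⊕ Fin (m.2 + n.1)) //
      ∀ l v, l.getLast? = some (Sum.inr v) → A.owner0 v = pl →
        (∀ t, σ l = some t → A.E (Sum.inr v) t) ∧
        ((∃ t, A.E (Sum.inr v) t) → (σ l).isSome) }

/-- The history (sequence of non-exit positions) of a play up to time `k`. -/
def histList (A : OPG M m n) (p : ℕ → Option A.Node) : ℕ → List A.EntryV
  | 0 => []
  | k + 1 => A.histList p k ++
      (match p k with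
        | some (Sum.inl s) => [s]
        | _ => [])

/-- `p` is the play induced by the strategies `σ0` and `σ1` starting at entry `i`. -/
def IsPlay (A : OPG M m n) (σ0 : A.Strat true) (σ1 : A.Strat false)
    (i : Fin (m.1 + n.2)) (p : ℕ → Option A.Node) : Prop :=
  p 0 = some (Sum.inl (Sum.inl i)) ∧
  ∀ k : ℕ,
    (p k = none → p (k + 1) = none) ∧
    (∀ o : Fin (m.2 + n.1), p k = some (Sum.inr o) → p (k + 1) = none) ∧
    (∀ e : Fin (m.1 + n.2), p k = some (Sum.inl (Sum.inl e)) →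
        ∃ t, A.E (Sum.inl e) t ∧ p (k + 1) = some (A.embed t)) ∧
    (∀ v : Fin A.V, p k = some (Sum.inl (Sum.inr v)) →
        p (k + 1) = Option.map A.embed
          ((if A.owner0 v then σ0.1 else σ1.1) (A.histList p (k + 1))))

/-- Maximum priority encountered along a play up to time `k`. -/
def maxPrioUpTo (A : OPG M m n) (p : ℕ → Option A.Node) (k : ℕ) : ℕ :=
  (Finset.range (k + 1)).sup fun j =>
    match p j with
    | some (Sum.inl (Sum.inr v)) => A.prio v
    | _ => 0

/-- The play `p` is finite, ends at exit position `o`, and the maximum priority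
encountered along it is `k`. -/
def EndsAtExit (A : OPG M m n) (p : ℕ → Option A.Node) (o : Fin (m.2 + n.1)) (k : ℕ) : Prop :=
  ∃ j, p j = some (Sum.inr o) ∧ A.maxPrioUpTo p j = k

/-- Priority `k` occurs infinitely often along `p`. -/
def InfOften (A : OPG M m n) (p : ℕ → Option A.Node) (k : ℕ) : Prop :=
  ∀ N, ∃ j, N ≤ j ∧ ∃ v : Fin A.V, p j = some (Sum.inl (Sum.inr v)) ∧ A.prio v = k

/-- The play is infinite and the maximum priority occurring infinitely often is even:
Player 0 wins the parity condition. -/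
def Wins0Inf (A : OPG M m n) (p : ℕ → Option A.Node) : Prop :=
  ∃ k, A.InfOften p k ∧ Even k ∧ ∀ j, A.InfOften p j → j ≤ k

/-- The play is infinite and the maximum priority occurring infinitely often is odd:
Player 1 wins the parity condition. -/
def Wins1Inf (A : OPG M m n) (p : ℕ → Option A.Node) : Prop :=
  ∃ k, A.InfOften p k ∧ Odd k ∧ ∀ j, A.InfOften p j → j ≤ k

/-- The play ends at a Player-0 position with no available move (a loss for Player 0). -/
def DeadEnd0 (A : OPG M m n) (p : ℕ → Option A.Node) : Prop :=
  ∃ j v, p j = some (Sum.inl (Sum.inr v)) ∧ p (j + 1) = none ∧ A.owner0 v = true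

/-- `⟨i, σ0⟩ = lose`: some Player-1 strategy produces a play that is losing for Player 0. -/
def LosesFrom (A : OPG M m n) (i : Fin (m.1 + n.2)) (σ0 : A.Strat true) : Prop :=
  ∃ (σ1 : A.Strat false) (p : ℕ → Option A.Node),
    A.IsPlay σ0 σ1 i p ∧ (A.Wins1Inf p ∨ A.DeadEnd0 p)

/-- The denotation `⟨i, σ0⟩` (when it is not `lose`): the set of pairs `(o, k)` of an
exit position and a maximal priority realised by some play against a Player-1 strategy. -/
def denot (A : OPG M m n) (i : Fin (m.1 + n.2)) (σ0 : A.Strat true) :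
    Set (Fin (m.2 + n.1) × ℕ) :=
  { x | ∃ (σ1 : A.Strat false) (p : ℕ → Option A.Node),
      A.IsPlay σ0 σ1 i p ∧ A.EndsAtExit p x.1 x.2 }

/-- The semantics `⟦A⟧` of an open parity game: all pairs `(T, i)` with
`T ⊆ exits(A) × ℙ` such that, for some Player-0 strategy `σ0`,
`⟨i,σ0⟩ ≠ lose` and `⟨i,σ0⟩ ⊆ T`. -/
def sem (A : OPG M m n) : Set (Set (Fin (m.2 + n.1) × ℕ) × Fin (m.1 + n.2)) :=
  { Ti | (∀ x ∈ Ti.1, x.2 ≤ M) ∧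
      ∃ σ0 : A.Strat true, ¬ A.LosesFrom Ti.2 σ0 ∧ A.denot Ti.2 σ0 ⊆ Ti.1 }

/-- Equivalence of open parity games: equality of semantics. -/
def equiv (A B : OPG M m n) : Prop := A.sem = B.sem

end OPG
/-- The sequential composite of two priority positions: entry `1 → u`; `u`
(Player 1, priority `p`) moves to `v`; `v` (Player 1, priority `q`) moves to the
unique exit. -/
def seqPrioG (M p q : ℕ) (hp : p ≤ M) (hq : q ≤ M) : OPG M (1, 0) (1, 0) where
  V := 2
  owner0 := fun _ => false
  prio := fun v => if v.val = 0 then p else q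
  prio_le := fun v => by split <;> omega
  E := fun s t =>
    (match s, t with
      | Sum.inl _, Sum.inl v => v.val == 0
      | Sum.inr v, Sum.inl v' => v.val == 0 && v'.val == 1
      | Sum.inr v, Sum.inr _ => v.val == 1
      | _, _ => false) = true
  entry_unique := by unfold ExistsUnique; decide
  exit_unique := by unfold ExistsUnique; decide

/-- A single Player-1 position of priority `r` between the entry and the exit. -/
def onePrioG (M r : ℕ) (hr : r ≤ M) : OPG M (1, 0) (1, 0) where
  V := 1
  owner0 := fun _ => false
  prio := fun _ => r
  prio_le := fun _ => hr
  E := fun s t =>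
    (match s, t with
      | Sum.inl _, Sum.inl _ => true
      | Sum.inr _, Sum.inr _ => true
      | _, _ => false) = true
  entry_unique := by unfold ExistsUnique; decide
  exit_unique := by unfold ExistsUnique; decide

namespace OPG

theorem getLast_hist {M : ℕ} {m n : ℕ × ℕ} (A : OPG M m n) (p : ℕ → Option A.Node) (k : ℕ)
    (s : A.EntryV) (h : p k = some (Sum.inl s)) :
    (A.histList p (k + 1)).getLast? = some s := by
  simp [histList, h]

theorem IsPlay.step {M : ℕ} {m n : ℕ × ℕ} {A : OPG M m n} {σ0 : A.Strat true}
    {σ1 : A.Strat false} {i : Fin (m.1 + n.2)} {p : ℕ → Option A.Node}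
    (h : A.IsPlay σ0 σ1 i p) (k : ℕ) (v : Fin A.V) (hv : p k = some (Sum.inl (Sum.inr v)))
    (ho : A.owner0 v = false) (he : ∃ t, A.E (Sum.inr v) t) :
    ∃ t, A.E (Sum.inr v) t ∧ p (k + 1) = some (A.embed t) := by
  have h1 := (h.2 k).2.2.2 v hv
  have h2 := σ1.2 _ v (A.getLast_hist p k _ hv) ho
  obtain ⟨t, ht⟩ := Option.isSome_iff_exists.1 (h2.2 he)
  refine ⟨t, h2.1 t ht, ?_⟩
  rw [h1, ho]
  simp [ht]

theorem IsPlay.none_after {M : ℕ} {m n : ℕ × ℕ} {A : OPG M m n} {σ0 : A.Strat true}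
    {σ1 : A.Strat false} {i : Fin (m.1 + n.2)} {p : ℕ → Option A.Node}
    (h : A.IsPlay σ0 σ1 i p) (j : ℕ) (o) (hj : p j = some (Sum.inr o)) :
    ∀ k, j < k → p k = none := by
  intro k hk
  induction k, hk using Nat.le_induction with
  | base => exact (h.2 j).2.1 o hj
  | succ k _ ih => exact (h.2 k).1 ih

/-- A game all of whose plays reach the exit with maximal priority `r`. -/
theorem sem_of_plays {M : ℕ} (A : OPG M (1, 0) (1, 0)) (r : ℕ)
    (howner : ∀ v, A.owner0 v = false) (L : ℕ)
    (hplay : ∀ σ0 σ1 i p, A.IsPlay σ0 σ1 i p →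
      (∀ k, k < L → ∃ s, p k = some (Sum.inl s)) ∧
      (∃ o, p L = some (Sum.inr o)) ∧ A.maxPrioUpTo p L = r)
    (hex : ∀ σ0 i, ∃ σ1 p, A.IsPlay σ0 σ1 i p) :
    A.sem = { Ti : Set (Fin (0 + 1) × ℕ) × Fin (1 + 0) |
          (∀ x ∈ Ti.1, x.2 ≤ M) ∧ ((0 : Fin (0 + 1)), r) ∈ Ti.1 } := by
  ext ⟨T, i⟩
  constructor
  · rintro ⟨hT, σ0, -, hd⟩
    refine ⟨hT, ?_⟩
    obtain ⟨σ1, p, hp⟩ := hex σ0 i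
    obtain ⟨_, ⟨o, ho⟩, hr⟩ := hplay _ _ _ _ hp
    have : o = (0 : Fin (0 + 1)) := Subsingleton.elim (α := Fin 1) _ _
    subst this
    exact hd ⟨σ1, p, hp, L, ho, hr⟩
  · rintro ⟨hT, hr⟩
    refine ⟨hT, ⟨fun _ => none, fun l v _ hv => by simp [howner] at hv⟩, ?_, ?_⟩
    · rintro ⟨σ1, p, hp, h | h⟩
      · obtain ⟨k, hk, -⟩ := h
        obtain ⟨_, ⟨o, ho⟩, _⟩ := hplay _ _ _ _ hp
        obtain ⟨j, hj, v, hv, -⟩ := hk (L + 1)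
        have := hp.none_after L o ho j (by omega)
        simp [this] at hv
      · obtain ⟨j, v, -, -, hv⟩ := h
        simp [howner] at hv
    · rintro ⟨o, k⟩ ⟨σ1, p, hp, j, hj, hk⟩
      obtain ⟨hlt, ⟨o', ho⟩, hm⟩ := hplay _ _ _ _ hp
      dsimp only at hj hk
      have hjL : j = L := by
        rcases lt_trichotomy j L with h | h | h
        · obtain ⟨s, hs⟩ := hlt j h
          simp [hs] at hj
        · exact h
        · have := hp.none_after L o' ho j h
          simp [this] at hj
      subst hjL
      have : o = (0 : Fin (0 + 1)) := Subsingleton.elim (α := Fin 1) _ _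
      subst this
      rw [← hk, hm]
      exact hr

end OPG

theorem seq_sem (M p q : ℕ) (hp : p ≤ M) (hq : q ≤ M) :
    (seqPrioG M p q hp hq).sem = { Ti : Set (Fin (0 + 1) × ℕ) × Fin (1 + 0) |
          (∀ x ∈ Ti.1, x.2 ≤ M) ∧ ((0 : Fin (0 + 1)), max p q) ∈ Ti.1 } := by
  apply OPG.sem_of_plays _ _ (fun _ => rfl) 3
  · intro σ0 σ1 i f hf
    have h0 := hf.1
    obtain ⟨t, ht, h1⟩ := (hf.2 0).2.2.1 _ h0
    have e1 : t = Sum.inl (0 : Fin 2) := by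
      revert ht; revert t
      rintro (v | o) - ht
      · have : v.val = 0 := by simpa [seqPrioG] using ht
        exact congrArg Sum.inl (Fin.ext this)
      · simp [seqPrioG] at ht
    subst e1
    obtain ⟨t, ht, h2⟩ := hf.step 1 (0 : Fin 2) h1 rfl ⟨Sum.inl (1 : Fin 2), rfl⟩
    have e1 : t = Sum.inl (1 : Fin 2) := by
      revert ht; revert t
      rintro (v | o) - ht
      · have : v.val = 1 := by simpa [seqPrioG] using ht
        exact congrArg Sum.inl (Fin.ext this)
      · simp [seqPrioG] at ht
    subst e1
    obtain ⟨t, ht, h3⟩ := hf.step 2 (1 : Fin 2) h2 rfl ⟨Sum.inr (0 : Fin 1), rfl⟩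
    have e1 : t = Sum.inr (0 : Fin 1) := by
      revert ht; revert t
      rintro (v | o) - ht
      · simp [seqPrioG] at ht
      · exact congrArg Sum.inr (Subsingleton.elim (α := Fin 1) _ _)
    subst e1
    refine ⟨?_, ⟨_, h3⟩, ?_⟩
    · intro k hk
      interval_cases k
      exacts [⟨_, h0⟩, ⟨_, h1⟩, ⟨_, h2⟩]
    · simp only [zero_add, Nat.reduceAdd] at h1 h2 h3
      simp [OPG.maxPrioUpTo, Finset.range_add_one, h0, h1, h2, h3, OPG.embed, seqPrioG, max_comm]
  · intro σ0 i
    refine ⟨⟨fun l => match l.getLast? with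
        | some (Sum.inr v) => if v.val = 0 then some (Sum.inl (1 : Fin 2))
            else some (Sum.inr (0 : Fin 1))
        | _ => none, ?_⟩, fun k => match k with
        | 0 => some (Sum.inl (Sum.inl i))
        | 1 => some (Sum.inl (Sum.inr (0 : Fin 2)))
        | 2 => some (Sum.inl (Sum.inr (1 : Fin 2)))
        | 3 => some (Sum.inr (0 : Fin 1))
        | _ => none, rfl, ?_⟩
    · intro l v hl _
      beta_reduce
      rw [hl]
      have hv : v = (0 : Fin 2) ∨ v = (1 : Fin 2) := 
        (by decide : ∀ v : Fin 2, v = 0 ∨ v = 1) v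
      rcases hv with rfl | rfl
      · exact ⟨by rintro t ⟨⟩; rfl, fun _ => rfl⟩
      · exact ⟨by rintro t ⟨⟩; rfl, fun _ => rfl⟩
    · rintro (_ | _ | _ | _ | k)
      · exact ⟨nofun, nofun, fun e _ => ⟨Sum.inl (0 : Fin 2), rfl, rfl⟩, nofun⟩
      · exact ⟨nofun, nofun, nofun, by rintro v ⟨⟩; rfl⟩
      · exact ⟨nofun, nofun, nofun, by rintro v ⟨⟩; rfl⟩
      · exact ⟨nofun, fun _ _ => rfl, nofun, nofun⟩
      · exact ⟨fun _ => rfl, nofun, nofun, nofun⟩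

theorem one_sem (M r : ℕ) (hr : r ≤ M) :
    (onePrioG M r hr).sem = { Ti : Set (Fin (0 + 1) × ℕ) × Fin (1 + 0) |
          (∀ x ∈ Ti.1, x.2 ≤ M) ∧ ((0 : Fin (0 + 1)), r) ∈ Ti.1 } := by
  apply OPG.sem_of_plays _ _ (fun _ => rfl) 2
  · intro σ0 σ1 i f hf
    have h0 := hf.1
    obtain ⟨t, ht, h1⟩ := (hf.2 0).2.2.1 _ h0
    have e1 : t = Sum.inl (0 : Fin 1) := by
      revert ht; revert t
      rintro (v | o) - ht
      · exact congrArg Sum.inl (Subsingleton.elim (α := Fin 1) _ _)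
      · simp [onePrioG] at ht
    subst e1
    obtain ⟨t, ht, h2⟩ := hf.step 1 (0 : Fin 1) h1 rfl ⟨Sum.inr (0 : Fin 1), rfl⟩
    have e1 : t = Sum.inr (0 : Fin 1) := by
      revert ht; revert t
      rintro (v | o) - ht
      · simp [onePrioG] at ht
      · exact congrArg Sum.inr (Subsingleton.elim (α := Fin 1) _ _)
    subst e1
    refine ⟨?_, ⟨_, h2⟩, ?_⟩
    · intro k hk
      interval_cases k
      exacts [⟨_, h0⟩, ⟨_, h1⟩]
    · simp only [zero_add, Nat.reduceAdd] at h1 h2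
      simp [OPG.maxPrioUpTo, Finset.range_add_one, h0, h1, h2, OPG.embed, onePrioG]
  · intro σ0 i
    refine ⟨⟨fun l => some (Sum.inr (0 : Fin 1)), ?_⟩, fun k => match k with
        | 0 => some (Sum.inl (Sum.inl i))
        | 1 => some (Sum.inl (Sum.inr (0 : Fin 1)))
        | 2 => some (Sum.inr (0 : Fin 1))
        | _ => none, rfl, ?_⟩
    · intro l v hl _
      exact ⟨by rintro t ⟨⟩; rfl, fun _ => rfl⟩
    · rintro (_ | _ | _ | k)
      · exact ⟨nofun, nofun, fun e _ => ⟨Sum.inl (0 : Fin 1), rfl, rfl⟩, nofun⟩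
      · exact ⟨nofun, nofun, nofun, by rintro v ⟨⟩; rfl⟩
      · exact ⟨nofun, fun _ _ => rfl, nofun, nofun⟩
      · exact ⟨fun _ => rfl, nofun, nofun, nofun⟩

/-- **Statement 12** (Soundness of the priority-composition axiom C3,
semantically). Composing priorities `p` then `q` is equivalent to the single
priority `max p q`; both games have semantics `{(T,1) | (1, max p q) ∈ T}`. -/
theorem priority_comp_sound (M p q : ℕ) (hM : 2 ≤ M) (hp : p ≤ M) (hq : q ≤ M) :
    (seqPrioG M p q hp hq).equiv (onePrioG M (max p q) (by omega)) ∧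
    (seqPrioG M p q hp hq).sem =
      { Ti : Set (Fin ((1, 0).2 + (1, 0).1) × ℕ) × Fin ((1, 0).1 + (1, 0).2) |
          (∀ x ∈ Ti.1, x.2 ≤ M) ∧ (⟨0, by omega⟩, max p q) ∈ Ti.1 } ∧
    (onePrioG M (max p q) (by omega)).sem =
      { Ti : Set (Fin ((1, 0).2 + (1, 0).1) × ℕ) × Fin ((1, 0).1 + (1, 0).2) |
          (∀ x ∈ Ti.1, x.2 ≤ M) ∧ (⟨0, by omega⟩, max p q) ∈ Ti.1 } := by
  have h1 := seq_sem M p q hp hq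
  have h2 := one_sem M (max p q) (by omega)
  exact ⟨h1.trans h2.symm, h1, h2⟩

end PaperPG
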